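/- On the negative-coupling side the Ward-constrained melonic flow has exactly one nontrivial fixed point, namely p₁: if ḡ < 0, m̄² > −1, (1+m̄²)⁵ − Ω′(ḡ,m̄²) ≠ 0, and β_m(ḡ,m̄²) = 0 and β_g(ḡ,m̄²) = 0, then m̄² = 5/4 and ḡ = −81/(64π²). (For ḡ < 0 and m̄² > −1 one has Ω(ḡ,m̄²) = (1+m̄²)² − π²ḡ > 0, so the fixed-point condition forces η = 0, and the η = 0 fixed point is unique.) -/

import Mathlib

open Real

/-- `Ω(ḡ, m̄²) := (1 + m̄²)² − π²ḡ`. -/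
noncomputable def Omega (g m : ℝ) : ℝ := (1 + m) ^ 2 - π ^ 2 * g

/-- `Ω′(ḡ, m̄²) := π²ḡ(1+m̄²)³(1 − 8/(3(1+m̄²)²)) + 6π⁴ḡ²`. -/
noncomputable def OmegaP (g m : ℝ) : ℝ :=
  π ^ 2 * g * (1 + m) ^ 3 * (1 - 8 / (3 * (1 + m) ^ 2)) + 6 * π ^ 4 * g ^ 2

/-- The Ward-constrained melonic anomalous dimension
`η(ḡ, m̄²) := 4π²ḡ((1+m̄²)³ + 9π²ḡ) / ((1+m̄²)⁵ − Ω′(ḡ, m̄²))`. -/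
noncomputable def eta (g m : ℝ) : ℝ :=
  4 * π ^ 2 * g * ((1 + m) ^ 3 + 9 * π ^ 2 * g) / ((1 + m) ^ 5 - OmegaP g m)

/-- `β_m = −(2+η)m̄² − 10π²ḡ(1+η/6)/(1+m̄²)²` for the Ward-constrained melonic flow. -/
noncomputable def betaM (g m : ℝ) : ℝ :=
  -(2 + eta g m) * m - 10 * π ^ 2 * g * (1 + eta g m / 6) / (1 + m) ^ 2

/-- `β_g = −ηḡΩ/(1+m̄²)² + 2π²ḡ²β_m/(1+m̄²)³` for the Ward-constrained melonic flow. -/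
noncomputable def betaG (g m : ℝ) : ℝ :=
  -eta g m * g * Omega g m / (1 + m) ^ 2 + 2 * π ^ 2 * g ^ 2 * betaM g m / (1 + m) ^ 3

/-- On the negative-coupling side the Ward-constrained melonic flow has exactly one
nontrivial fixed point, namely `p₁ = (m̄², ḡ) = (5/4, −81/(64π²))`. (For `ḡ < 0` and
`m̄² > −1` one has `Ω = (1+m̄²)² − π²ḡ > 0`, so the fixed-point condition forces `η = 0`,
and the `η = 0` fixed point is unique.) -/
theorem negative_coupling_unique_fixed_point (g m : ℝ) (hg : g < 0) (hm : -1 < m)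
    (hden : (1 + m) ^ 5 - OmegaP g m ≠ 0)
    (hβm : betaM g m = 0) (hβg : betaG g m = 0) :
    m = 5 / 4 ∧ g = -81 / (64 * π ^ 2) := by
  have hx : 0 < 1 + m := by linarith
  have hpi : 0 < π ^ 2 := by positivity
  have hO : 0 < Omega g m := by
    unfold Omega
    nlinarith [mul_pos hpi (neg_pos.mpr hg), pow_pos hx 2]
  have he : eta g m = 0 := by
    unfold betaG at hβg
    rw [hβm] at hβg
    simpa [hO.ne', hg.ne, hx.ne'] using hβg
  have h1 : (1 + m) ^ 3 + 9 * π ^ 2 * g = 0 := by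
    unfold eta at he
    rcases div_eq_zero_iff.mp he with h | h
    · rcases mul_eq_zero.mp h with h | h
      · exact absurd h (mul_ne_zero (by positivity) hg.ne)
      · exact h
    · exact absurd h hden
  have h2 : m * (1 + m) ^ 2 = -5 * π ^ 2 * g := by
    unfold betaM at hβm
    rw [he] at hβm
    field_simp at hβm
    linarith
  have h3 : (1 + m) ^ 2 * (4 * m - 5) = 0 := by linear_combination 9 * h2 - 5 * h1
  have h4 : m = 5 / 4 := by
    rcases mul_eq_zero.mp h3 with h | h
    · exact absurd h (by positivity)
    · linarith
  refine ⟨h4, ?_⟩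
  rw [h4] at h1
  rw [eq_div_iff (by positivity)]
  linarith
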